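/- arXiv:0904.3268 — 5 statements merged into one kernel-verified Lean document; each statement's English description precedes it below -/
import Mathlib

section
/- Let A be a normed algebra over 𝕜 (ℝ or ℂ), let X be a Banach space, let J be a left ideal of A containing an m-bounded approximate left identity for itself, let π : J → B(X) make X a non-degenerate normed left J-module, and let π̄ : A → B(X) be the extension of π. Then: (i) for each a ∈ A, π̄(a) is the unique bounded operator T on X satisfying T π(j) = π(aj) for all j ∈ J; (ii) for any bounded approximate left identity (e_i) of J for itself, π(e_i) converges to the identity operator of X in the strong operator topology, and for each a ∈ A, π(a e_i) converges to π̄(a) in the strong operator topology; (iii) if a ∈ A satisfies aj = j for all j ∈ J, then π̄(a) = id_X. -/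
open Filter Topology

/-!
The extension `π̄` satisfies `π̄ a ∘ π j = π (a j)`, and by non-degeneracy a bounded operator on `X`
is determined by its compositions with the operators `π j`; this settles uniqueness, and the case
of an `a` with `a j = j`. If `e` is a bounded approximate left identity, then
`π (e i) (π j x) = π (e i * j) x → π j x`. As the operators `π (e i)` are uniformly bounded, the
convergence passes to the closed span of the vectors `π j x`, which is all of `X`. Applying `π̄ a`
gives `π (a * e i) → π̄ a` strongly.
-/

theorem tendsto_apply_of_mem_span {R R₂ E F ι : Type*} [Semiring R] [Semiring R₂] {σ : R →+* R₂}
    [AddCommMonoid E] [TopologicalSpace E] [Module R E]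
    [AddCommMonoid F] [TopologicalSpace F] [Module R₂ F]
    [ContinuousAdd F] [ContinuousConstSMul R₂ F]
    {l : Filter ι} {T : ι → E →SL[σ] F} {S : E →SL[σ] F} {s : Set E}
    (hs : ∀ y ∈ s, Tendsto (T · y) l (𝓝 (S y))) {x : E} (hx : x ∈ Submodule.span R s) :
    Tendsto (T · x) l (𝓝 (S x)) := by
  induction hx using Submodule.span_induction with
  | mem y hy => exact hs y hy
  | zero => simpa only [map_zero] using tendsto_const_nhds
  | add y z _ _ hy hz => simpa only [map_add] using hy.add hz
  | smul c y _ hy => simpa only [map_smulₛₗ] using hy.const_smul (σ c)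

theorem tendsto_apply_of_dense_span_of_norm_le {𝕜 𝕜₂ E F ι : Type*} [NontriviallyNormedField 𝕜]
    [NontriviallyNormedField 𝕜₂] {σ : 𝕜 →+* 𝕜₂} [RingHomIsometric σ]
    [SeminormedAddCommGroup E] [NormedSpace 𝕜 E] [SeminormedAddCommGroup F] [NormedSpace 𝕜₂ F]
    {l : Filter ι} {T : ι → E →SL[σ] F} {S : E →SL[σ] F} {s : Set E} {C : ℝ}
    (hT : ∀ i, ‖T i‖ ≤ C) (hs : Dense (Submodule.span 𝕜 s : Set E))
    (hlim : ∀ y ∈ s, Tendsto (T · y) l (𝓝 (S y))) (x : E) :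
    Tendsto (T · x) l (𝓝 (S x)) := by
  have hequi : Equicontinuous ((↑) ∘ T : ι → E → F) ↔ ∃ C, ∀ i, ‖T i‖ ≤ C :=
    (NormedSpace.equicontinuous_TFAE T).out 1 5
  exact (hequi.mpr ⟨C, hT⟩ x).tendsto_of_mem_closure S.continuous.continuousWithinAt
    (fun _ hy => tendsto_apply_of_mem_span hlim hy) (hs x)

/-- Non-degeneracy of a family `π` of bounded operators on `X`: the vectors `π j x` span a dense
subspace. For a normed left `J`-module structure `π : J → B(X)` this is non-degeneracy of the
module. -/
def IsNondegenerateRepresentation {𝕜 J X : Type*} [Semiring 𝕜] [AddCommMonoid X]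
    [TopologicalSpace X] [Module 𝕜 X] (π : J → X →L[𝕜] X) : Prop :=
  Dense (Submodule.span 𝕜 (Set.range fun p : J × X => π p.1 p.2) : Set X)

namespace IsNondegenerateRepresentation

theorem ext_of_comp_eq {𝕜 J X Y : Type*} [Semiring 𝕜] [AddCommMonoid X] [TopologicalSpace X]
    [Module 𝕜 X] [AddCommMonoid Y] [TopologicalSpace Y] [Module 𝕜 Y] [T2Space Y]
    {π : J → X →L[𝕜] X} (hπ : IsNondegenerateRepresentation π) {S T : X →L[𝕜] Y}
    (hST : ∀ j, S ∘L π j = T ∘L π j) : S = T := by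
  refine ContinuousLinearMap.ext_on hπ ?_
  rintro _ ⟨⟨j, x⟩, rfl⟩
  exact congr($(hST j) x)

theorem tendsto_apply_of_tendsto_mul {𝕜 J X ι : Type*} [NontriviallyNormedField 𝕜]
    [NonUnitalSeminormedRing J] [NormedSpace 𝕜 J] [SeminormedAddCommGroup X] [NormedSpace 𝕜 X]
    {π : J →L[𝕜] X →L[𝕜] X} (hπ : IsNondegenerateRepresentation π)
    (hmul : ∀ j k, π (j * k) = π j * π k) {l : Filter ι} {e : ι → J} {m : ℝ}
    (hbdd : ∀ i, ‖e i‖ ≤ m) (hlim : ∀ j, Tendsto (fun i => e i * j) l (𝓝 j)) (x : X) :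
    Tendsto (fun i => π (e i) x) l (𝓝 x) := by
  have hπe : ∀ i, ‖π (e i)‖ ≤ ‖π‖ * m := fun i => π.le_opNorm_of_le (hbdd i)
  refine tendsto_apply_of_dense_span_of_norm_le (S := .id 𝕜 X) hπe hπ ?_ x
  rintro _ ⟨⟨j, y⟩, rfl⟩
  have hj : Tendsto (fun i => π (e i * j) y) l (𝓝 (π j y)) :=
    ((π.flip y).continuous.tendsto j).comp (hlim j)
  simpa only [hmul, mul_apply_eq_comp, ContinuousLinearMap.id_apply] using hj

end IsNondegenerateRepresentation

theorem map_mul_eq_of_extends {A M S : Type*} [Mul A] [Mul M] [SetLike S A] {J : S}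
    (hJ : ∀ a : A, ∀ j ∈ J, a * j ∈ J) {π : J → M} {ρ : A →ₙ* M} (hρ : ∀ j : J, ρ j = π j)
    (a : A) (j : J) : ρ a * π j = π ⟨a * j, hJ a j j.2⟩ := by
  rw [← hρ, ← hρ, ← map_mul]

theorem extension_from_left_ideal_properties_general
    {𝕜 A X : Type*} [NontriviallyNormedField 𝕜] [NonUnitalSeminormedRing A] [NormedSpace 𝕜 A]
    [NormedAddCommGroup X] [NormedSpace 𝕜 X]
    (J : NonUnitalSubalgebra 𝕜 A) (hJ : ∀ a : A, ∀ j ∈ J, a * j ∈ J)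
    (π : J →L[𝕜] X →L[𝕜] X) (hmul : ∀ j k : J, π (j * k) = π j * π k)
    (hπ : IsNondegenerateRepresentation π)
    (πb : A →ₙ* (X →L[𝕜] X)) (hπb : ∀ j : J, πb j = π j) :
    (∀ a : A, (∀ j : J, πb a * π j = π ⟨a * j, hJ a j j.2⟩) ∧
      (∀ T : X →L[𝕜] X, (∀ j : J, T * π j = π ⟨a * j, hJ a j j.2⟩) → T = πb a)) ∧
    (∀ (κ : Type*) (l : Filter κ) (e : κ → J) (m : ℝ), (∀ i, ‖(e i : A)‖ ≤ m) →
      (∀ j : J, Tendsto (fun i => (e i : A) * (j : A)) l (𝓝 (j : A))) →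
      (∀ x : X, Tendsto (fun i => π (e i) x) l (𝓝 x)) ∧
        (∀ a : A, ∀ x : X,
          Tendsto (fun i => π ⟨a * e i, hJ a (e i) (e i).2⟩ x) l (𝓝 (πb a x)))) ∧
    (∀ a : A, (∀ j : J, a * (j : A) = j) → πb a = 1) := by
  have hext := map_mul_eq_of_extends hJ hπb
  refine ⟨fun a => ⟨hext a, fun T hT => ?unique⟩, fun κ l e m hbdd hlim => ?tendsto,
    fun a ha => ?one⟩
  case unique => exact hπ.ext_of_comp_eq fun j => (hT j).trans (hext a j).symm
  case tendsto =>
    let : NormedSpace 𝕜 J := J.toSubmodule.normedSpace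
    have hid : ∀ x, Tendsto (fun i => π (e i) x) l (𝓝 x) :=
      hπ.tendsto_apply_of_tendsto_mul hmul hbdd fun j => tendsto_subtype_rng.mpr (hlim j)
    refine ⟨hid, fun a x => ?_⟩
    simpa only [← hext, mul_apply_eq_comp, Function.comp_def] using
      ((πb a).continuous.tendsto x).comp (hid x)
  case one =>
    have haj : ∀ j : J, (⟨a * j, hJ a j j.2⟩ : J) = j := fun j => Subtype.ext (ha j)
    exact hπ.ext_of_comp_eq fun j => (hext a j).trans congr(π $(haj j))

/-- **Properties of the extension of a non-degenerate left module from a left ideal.**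
Let `J` be a left ideal of a normed algebra `A` containing an `m`-bounded approximate left
identity for itself, `π : J → B(X)` a bounded homomorphism making the Banach space `X` a
non-degenerate left `J`-module, and let `π̄` be the (unique) algebra homomorphism extension
of `π` to `A`. Then: (i) `π̄(a)` is the unique bounded operator `T` with `T π(j) = π(aj)` for
all `j ∈ J`; (ii) for every bounded approximate left identity `(e_i)` of `J` for itself one has
`π(e_i) → id_X` and `π(a e_i) → π̄(a)` in the strong operator topology; (iii) if `aj = j` for
all `j ∈ J` then `π̄(a) = id_X`. -/
theorem extension_from_left_ideal_properties
    {𝕜 : Type*} [RCLike 𝕜]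
    {A : Type*} [NonUnitalNormedRing A] [NormedSpace 𝕜 A]
    [IsScalarTower 𝕜 A A] [SMulCommClass 𝕜 A A]
    {X : Type*} [NormedAddCommGroup X] [NormedSpace 𝕜 X] [CompleteSpace X]
    (J : NonUnitalSubalgebra 𝕜 A)
    (hJideal : ∀ a : A, ∀ j ∈ J, a * j ∈ J)
    (m : ℝ) {ι : Type*} (l : Filter ι) [l.NeBot] (e : ι → J)
    (he_bdd : ∀ i, ‖(e i : A)‖ ≤ m)
    (he_lim : ∀ j : J, Tendsto (fun i => (e i : A) * (j : A)) l (𝓝 (j : A)))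
    (π : J →L[𝕜] X →L[𝕜] X)
    (hπmul : ∀ j k : J, π (j * k) = π j * π k)
    (hnd : Dense (Submodule.span 𝕜 (Set.range fun p : J × X => π p.1 p.2) : Set X))
    (πb : A → X →L[𝕜] X)
    (hπb : IsLinearMap 𝕜 πb ∧ (∀ a b : A, πb (a * b) = πb a * πb b) ∧
      (∀ j : J, πb (j : A) = π j)) :
    -- (i) `π̄(a)` is the unique bounded operator `T` with `T π(j) = π(a j)` for all `j ∈ J`
    (∀ a : A, (∀ j : J, πb a * π j = π ⟨a * (j : A), hJideal a j j.2⟩) ∧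
      (∀ T : X →L[𝕜] X,
        (∀ j : J, T * π j = π ⟨a * (j : A), hJideal a j j.2⟩) → T = πb a)) ∧
    -- (ii) for every bounded approximate left identity of `J` for itself,
    -- `π(e_i) → id` and `π(a e_i) → π̄(a)` in the strong operator topology
    (∀ (κ : Type*) (l' : Filter κ) (_ : l'.NeBot) (e' : κ → J) (m' : ℝ),
      (∀ i, ‖(e' i : A)‖ ≤ m') →
      (∀ j : J, Tendsto (fun i => (e' i : A) * (j : A)) l' (𝓝 (j : A))) →
      ((∀ x : X, Tendsto (fun i => π (e' i) x) l' (𝓝 x)) ∧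
        (∀ a : A, ∀ x : X,
          Tendsto (fun i => π ⟨a * (e' i : A), hJideal a (e' i) (e' i).2⟩ x) l'
            (𝓝 (πb a x))))) ∧
    -- (iii) if `a` acts from the left on `J` as the identity, then `π̄(a) = id_X`
    (∀ a : A, (∀ j : J, a * (j : A) = (j : A)) → πb a = 1) := by
  obtain ⟨-, hmul, hext⟩ := hπb
  have general := extension_from_left_ideal_properties_general J hJideal π hπmul hnd ⟨πb, hmul⟩ hext
  exact ⟨general.1, fun κ l' _ => general.2.1 κ l', general.2.2⟩
end

section
/- Let A be a normed algebra over ℂ equipped with an involution (a conjugate-linear anti-homomorphism of order 2, not assumed bounded), let J be a left ideal of A that is invariant under the involution (hence a two-sided ideal) and contains an m-bounded approximate left identity for itself, let H be a complex Hilbert space, and let π : J → B(H) be a bounded, involutive algebra homomorphism making H a non-degenerate normed left J-module. Then the unique algebra homomorphism π̄ : A → B(H) extending π is involutive: π̄(a*) = π̄(a)* for all a ∈ A. -/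
open Filter Topology

/-!
Let `ρ` be the extension of the representation from `J` to `A`. For `j ∈ J` both `j` and
`star a * j` lie in `J`, where `ρ` respects the involution, and `star (star a * j) = star j * a`.
Hence `ρ (star a) * ρ j` and `star (ρ a) * ρ j` have the same adjoint `star (ρ j) * ρ a`. So
`ρ (star a)` and the adjoint of `ρ a` agree on the vectors `ρ j x`, which span a dense subspace.
-/

theorem map_star_mul_eq_star_map_mul_of_leftIdeal {A B : Type*} [Mul A] [StarMul A]
    [Mul B] [StarMul B] {J : Set A} (hJideal : ∀ a : A, ∀ j ∈ J, a * j ∈ J) (ρ : A →ₙ* B)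
    (hρstar : ∀ j ∈ J, ρ (star j) = star (ρ j)) (a : A) {j : A} (hj : j ∈ J) :
    ρ (star a) * ρ j = star (ρ a) * ρ j := by
  apply star_injective
  calc star (ρ (star a) * ρ j)
      = ρ (star (star a * j)) := by rw [← map_mul, hρstar _ (hJideal _ _ hj)]
    _ = ρ (star j) * ρ a := by rw [star_mul, star_star, map_mul]
    _ = star (star (ρ a) * ρ j) := by rw [hρstar j hj, star_mul, star_star]

theorem eq_of_comp_eq_comp_of_dense_span {𝕜 E F G ι : Type*} [Semiring 𝕜]
    [TopologicalSpace E] [AddCommMonoid E] [Module 𝕜 E]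
    [TopologicalSpace F] [T2Space F] [AddCommMonoid F] [Module 𝕜 F]
    [TopologicalSpace G] [AddCommMonoid G] [Module 𝕜 G]
    {u : ι → G →L[𝕜] E}
    (hu : Dense (Submodule.span 𝕜 (Set.range fun p : ι × G => u p.1 p.2) : Set E))
    {S T : E →L[𝕜] F} (hST : ∀ i, S ∘L u i = T ∘L u i) : S = T := by
  refine ContinuousLinearMap.ext_on hu ?_
  rintro _ ⟨⟨i, x⟩, rfl⟩
  exact DFunLike.congr_fun (hST i) x

theorem involutive_extension_from_left_ideal_general {𝕜 A H : Type*} [RCLike 𝕜]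
    [Mul A] [StarMul A] [NormedAddCommGroup H] [InnerProductSpace 𝕜 H] [CompleteSpace H]
    {J : Set A} (hJideal : ∀ a : A, ∀ j ∈ J, a * j ∈ J) (ρ : A →ₙ* (H →L[𝕜] H))
    (hρstar : ∀ j ∈ J, ρ (star j) = ContinuousLinearMap.adjoint (ρ j))
    (hnd : Dense (Submodule.span 𝕜 (Set.range fun p : J × H => ρ p.1 p.2) : Set H)) (a : A) :
    ρ (star a) = ContinuousLinearMap.adjoint (ρ a) :=
  eq_of_comp_eq_comp_of_dense_span (u := fun j : J => ρ j) hnd fun j =>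
    map_star_mul_eq_star_map_mul_of_leftIdeal hJideal ρ hρstar a j.2

/-- **Involutivity of the extension.** Let `A` be a complex normed algebra with an involution
(not assumed bounded), `J` a star-invariant left ideal of `A` containing an `m`-bounded
approximate left identity for itself, `H` a complex Hilbert space, and `π : J → B(H)` a
bounded involutive algebra homomorphism making `H` a non-degenerate normed left `J`-module.
Then the unique algebra homomorphism `π̄ : A → B(H)` extending `π` is involutive:
`π̄(a*) = π̄(a)*` for all `a ∈ A`. -/
theorem involutive_extension_from_left_ideal
    {A : Type*} [NonUnitalNormedRing A] [NormedSpace ℂ A]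
    [IsScalarTower ℂ A A] [SMulCommClass ℂ A A]
    [StarRing A] [StarModule ℂ A]
    {H : Type*} [NormedAddCommGroup H] [InnerProductSpace ℂ H] [CompleteSpace H]
    (J : NonUnitalSubalgebra ℂ A)
    (hJideal : ∀ a : A, ∀ j ∈ J, a * j ∈ J)
    (hJstar : ∀ j ∈ J, star j ∈ J)
    (m : ℝ) {ι : Type*} (l : Filter ι) [l.NeBot] (e : ι → J)
    (he_bdd : ∀ i, ‖(e i : A)‖ ≤ m)
    (he_lim : ∀ j : J, Tendsto (fun i => (e i : A) * (j : A)) l (𝓝 (j : A)))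
    (π : J →L[ℂ] H →L[ℂ] H)
    (hπmul : ∀ j k : J, π (j * k) = π j * π k)
    (hπstar : ∀ j : J, π ⟨star (j : A), hJstar j j.2⟩ = ContinuousLinearMap.adjoint (π j))
    (hnd : Dense (Submodule.span ℂ (Set.range fun p : J × H => π p.1 p.2) : Set H))
    (πb : A → H →L[ℂ] H)
    (hπb : IsLinearMap ℂ πb ∧ (∀ a b : A, πb (a * b) = πb a * πb b) ∧
      (∀ j : J, πb (j : A) = π j)) :
    ∀ a : A, πb (star a) = ContinuousLinearMap.adjoint (πb a) := by
  obtain ⟨-, hmul, hext⟩ := hπb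
  exact involutive_extension_from_left_ideal_general (J := J) hJideal ⟨πb, hmul⟩
    (fun j hj => by simpa only [← hext] using! hπstar ⟨j, hj⟩) (by simpa only [← hext] using! hnd)
end

section
/- Let A be a normed algebra with an m-bounded approximate left identity, let X be a Banach space, and let π_l : A → B(X) be a bounded algebra homomorphism making X a non-degenerate normed left A-module. Then there exists a unique algebra homomorphism π̄_l : M_l(A) → B(X) such that π̄_l ∘ λ = π_l, where λ : A → M_l(A) is the canonical map. This π̄_l is unital and bounded with ‖π̄_l‖ ≤ m‖π_l‖, X becomes a non-degenerate normed left M_l(A)-module, π̄_l(L)π_l(a) = π_l(L(a)) for all L ∈ M_l(A) and a ∈ A (so π_l(A) is a left ideal in π̄_l(M_l(A))), and for any bounded approximate left identity (e_i) of A one has π_l(e_i) → id_X and π̄_l(L) = lim_i π_l(L(e_i)) in the strong operator topology. -/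
open Filter Topology

/-- A left centralizer of a normed algebra `A`: a bounded operator `L` on `A` with
`L(ab) = L(a)b`. The left centralizer algebra `M_l(A)` is the set of all of these. -/
def LeftCentralizers (𝕜 : Type*) (A : Type*) [RCLike 𝕜] [NonUnitalNormedRing A]
    [NormedSpace 𝕜 A] [IsScalarTower 𝕜 A A] [SMulCommClass 𝕜 A A] :
    Set (A →L[𝕜] A) :=
  {L | ∀ a b : A, L (a * b) = L a * b}

/-!
Non-degeneracy makes an operator `S` on `X` determined by its products `S * π a`, so the identity
`π̄ L * π a = π (L a)` pins down `π̄ L`, and every algebraic property of `π̄` is checked after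
multiplying by `π a`. It also forces uniqueness, since `L ∘ λ(a) = λ(L a)`. Existence comes from
`π (L (e i)) (π a x) = π (L (e i * a)) x → π (L a) x`: the operators `π (L (e i))` are bounded by
`m * ‖π‖ * ‖L‖` and converge pointwise on a set with dense span, so they converge strongly on the
Banach space `X`.
-/

section PointwiseLimits

theorem isClosed_setOf_cauchy_map_of_equicontinuous {ι E α : Type*} [TopologicalSpace E]
    [UniformSpace α] {l : Filter ι} [l.NeBot] {f : ι → E → α} (hf : Equicontinuous f) :
    IsClosed {x | Cauchy (map (f · x) l)} := by
  refine isClosed_of_closure_subset fun x hx => cauchy_map_iff.2 ⟨‹_›, fun U hU => mem_map.2 ?_⟩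
  obtain ⟨V, hV, hV_symm, hVU⟩ := comp_comp_symm_mem_uniformity_sets hU
  obtain ⟨y, hxy, hy⟩ := mem_closure_iff_nhds.1 hx _ (hf x V hV)
  filter_upwards [mem_map.1 ((cauchy_map_iff.1 hy).2 hV)] with p hp
  exact hVU ⟨f p.2 y, ⟨f p.1 y, hxy p.1, hp⟩, hV_symm.symm _ _ (hxy p.2)⟩

section LinearMap

variable {ι R E F : Type*} [Semiring R] [AddCommMonoid E] [Module R E] [AddCommMonoid F]
  [Module R F] {l : Filter ι} {T : ι → E →ₗ[R] F} {s : Set E}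

theorem exists_tendsto_apply_of_mem_span [TopologicalSpace F] [ContinuousAdd F]
    [ContinuousConstSMul R F] (hs : ∀ x ∈ s, ∃ z, Tendsto (T · x) l (𝓝 z)) {x : E}
    (hx : x ∈ Submodule.span R s) : ∃ z, Tendsto (T · x) l (𝓝 z) := by
  induction hx using Submodule.span_induction with
  | mem x hx => exact hs x hx
  | zero => exact ⟨0, by simpa only [map_zero] using tendsto_const_nhds⟩
  | add x y _ _ hx hy =>
    obtain ⟨z, hz⟩ := hx
    obtain ⟨w, hw⟩ := hy
    exact ⟨z + w, by simpa only [map_add] using hz.add hw⟩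
  | smul c x _ hx =>
    obtain ⟨z, hz⟩ := hx
    exact ⟨c • z, by simpa only [map_smul] using hz.const_smul c⟩

theorem exists_tendsto_apply_of_dense_span [TopologicalSpace E] [UniformSpace F] [CompleteSpace F]
    [ContinuousAdd F] [ContinuousConstSMul R F] [l.NeBot] (hT : Equicontinuous fun i => ⇑(T i))
    (hs_dense : Dense (Submodule.span R s : Set E))
    (hs : ∀ x ∈ s, ∃ z, Tendsto (T · x) l (𝓝 z)) (x : E) : ∃ z, Tendsto (T · x) l (𝓝 z) := by
  have cauchy_of_mem_span : (Submodule.span R s : Set E) ⊆ {x | Cauchy (map (T · x) l)} :=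
    fun _ hy => cauchy_map_iff_exists_tendsto.2 (exists_tendsto_apply_of_mem_span hs hy)
  have cauchy : Cauchy (map (T · x) l) :=
    closure_minimal cauchy_of_mem_span (isClosed_setOf_cauchy_map_of_equicontinuous hT) (hs_dense x)
  exact cauchy_map_iff_exists_tendsto.1 cauchy

end LinearMap

theorem exists_opNorm_le_tendsto_apply_of_dense_span {ι 𝕜 E F : Type*} [NontriviallyNormedField 𝕜]
    [SeminormedAddCommGroup E] [NormedSpace 𝕜 E] [NormedAddCommGroup F] [NormedSpace 𝕜 F]
    [CompleteSpace F] {l : Filter ι} [l.NeBot] {T : ι → E →L[𝕜] F} {C : ℝ} (hC : ∀ i, ‖T i‖ ≤ C)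
    {s : Set E} (hs_dense : Dense (Submodule.span 𝕜 s : Set E))
    (hs : ∀ x ∈ s, ∃ z, Tendsto (T · x) l (𝓝 z)) :
    ∃ S : E →L[𝕜] F, ‖S‖ ≤ C ∧ ∀ x, Tendsto (T · x) l (𝓝 (S x)) := by
  have exists_norm_le : ∃ C, ∀ i, ‖T i‖ ≤ C := ⟨C, hC⟩
  have equicontinuous_T : Equicontinuous fun i => ⇑(T i) :=
    ((NormedSpace.equicontinuous_TFAE T).out 5 1).1 exists_norm_le
  choose f hf using exists_tendsto_apply_of_dense_span (T := fun i => (T i).toLinearMap)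
    equicontinuous_T hs_dense hs
  have isBounded_range : Bornology.IsBounded (Set.range T) :=
    isBounded_iff_forall_norm_le.2 ⟨C, Set.forall_mem_range.2 hC⟩
  refine ⟨.ofTendstoOfBoundedRange f T (tendsto_pi_nhds.2 hf) isBounded_range, ?_, hf⟩
  obtain ⟨i⟩ := l.nonempty_of_neBot
  refine ContinuousLinearMap.opNorm_le_bound _ ((norm_nonneg _).trans (hC i)) fun x => ?_
  exact le_of_tendsto (hf x).norm (.of_forall fun i => (T i).le_of_opNorm_le (hC i) x)

end PointwiseLimits

theorem dense_span_range_algHom_apply {𝕜 B X : Type*} [NontriviallyNormedField 𝕜] [Semiring B]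
    [Algebra 𝕜 B] [SeminormedAddCommGroup X] [NormedSpace 𝕜 X] (Φ : B →ₐ[𝕜] X →L[𝕜] X) :
    Dense (Submodule.span 𝕜 (Set.range fun p : B × X => Φ p.1 p.2) : Set X) :=
  dense_univ.mono fun x _ => Submodule.subset_span ⟨(1, x), by simp⟩

theorem eq_of_forall_mul_eq_of_dense_span {𝕜 A X : Type*} [NontriviallyNormedField 𝕜]
    [NormedAddCommGroup X] [NormedSpace 𝕜 X] {π : A → X →L[𝕜] X}
    (hnd : Dense (Submodule.span 𝕜 (Set.range fun p : A × X => π p.1 p.2) : Set X))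
    {S T : X →L[𝕜] X} (h : ∀ a, S * π a = T * π a) : S = T := by
  refine ContinuousLinearMap.ext_on hnd ?_
  rintro _ ⟨⟨a, x⟩, rfl⟩
  exact DFunLike.congr_fun (h a) x

section StrongLimits

variable {𝕜 A X : Type*} [NontriviallyNormedField 𝕜] [NonUnitalSeminormedRing A] [NormedSpace 𝕜 A]
  [NormedAddCommGroup X] [NormedSpace 𝕜 X] {π : A →L[𝕜] X →L[𝕜] X}
  {ι : Type*} {l : Filter ι} {e : ι → A} {L : A →L[𝕜] A}

theorem tendsto_apply_centralizer_apply (hπmul : ∀ a b, π (a * b) = π a * π b)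
    (he_lim : ∀ a, Tendsto (fun i => e i * a) l (𝓝 a)) (hL : ∀ a b, L (a * b) = L a * b)
    (a : A) (x : X) : Tendsto (fun i => π (L (e i)) (π a x)) l (𝓝 (π (L a) x)) := by
  have continuous_apply_L : Continuous fun b => π (L b) x := by fun_prop
  have apply_L_mul (b : A) : π (L (b * a)) x = π (L b) (π a x) := by
    rw [hL, hπmul, mul_apply_eq_comp]
  simpa only [Function.comp_def, apply_L_mul] using (continuous_apply_L.tendsto a).comp (he_lim a)

variable [CompleteSpace X] [l.NeBot]

theorem exists_strong_limit_of_centralizer (hπmul : ∀ a b, π (a * b) = π a * π b)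
    (hnd : Dense (Submodule.span 𝕜 (Set.range fun p : A × X => π p.1 p.2) : Set X))
    {m : ℝ} (he_bdd : ∀ i, ‖e i‖ ≤ m) (he_lim : ∀ a, Tendsto (fun i => e i * a) l (𝓝 a))
    (hL : ∀ a b, L (a * b) = L a * b) :
    ∃ S : X →L[𝕜] X, (∀ a, S * π a = π (L a)) ∧ ‖S‖ ≤ m * ‖π‖ * ‖L‖ ∧
      ∀ x, Tendsto (fun i => π (L (e i)) x) l (𝓝 (S x)) := by
  have norm_le (i : ι) : ‖π (L (e i))‖ ≤ m * ‖π‖ * ‖L‖ :=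
    calc ‖π (L (e i))‖ ≤ ‖π‖ * (‖L‖ * m) :=
          π.le_opNorm_of_le (L.le_opNorm_of_le (he_bdd i))
      _ = m * ‖π‖ * ‖L‖ := by ring
  have tendsto_apply := tendsto_apply_centralizer_apply hπmul he_lim hL
  obtain ⟨S, hS_norm, hS_lim⟩ := exists_opNorm_le_tendsto_apply_of_dense_span norm_le hnd
    (Set.forall_mem_range.2 fun p => ⟨_, tendsto_apply p.1 p.2⟩)
  refine ⟨S, fun a => ?_, hS_norm, hS_lim⟩
  ext x
  exact tendsto_nhds_unique (hS_lim (π a x)) (tendsto_apply a x)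

theorem tendsto_of_forall_mul_eq_centralizer_apply (hπmul : ∀ a b, π (a * b) = π a * π b)
    (hnd : Dense (Submodule.span 𝕜 (Set.range fun p : A × X => π p.1 p.2) : Set X))
    {m : ℝ} (he_bdd : ∀ i, ‖e i‖ ≤ m) (he_lim : ∀ a, Tendsto (fun i => e i * a) l (𝓝 a))
    (hL : ∀ a b, L (a * b) = L a * b) {S : X →L[𝕜] X} (hS : ∀ a, S * π a = π (L a)) (x : X) :
    Tendsto (fun i => π (L (e i)) x) l (𝓝 (S x)) := by
  obtain ⟨T, hT, -, hT_lim⟩ := exists_strong_limit_of_centralizer hπmul hnd he_bdd he_lim hL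
  have S_eq_T : S = T := eq_of_forall_mul_eq_of_dense_span hnd fun a => (hS a).trans (hT a).symm
  exact S_eq_T ▸ hT_lim x

end StrongLimits

section LeftCentralizerAlgebra

variable (𝕜 : Type*) {A : Type*} [RCLike 𝕜] [NonUnitalNormedRing A] [NormedSpace 𝕜 A]
  [IsScalarTower 𝕜 A A] [SMulCommClass 𝕜 A A]

variable (A) in
/-- The left centralizer algebra `M_l(A)`, i.e. `LeftCentralizers 𝕜 A` as a unital subalgebra
of `B(A)`. -/
def leftCentralizerAlgebra : Subalgebra 𝕜 (A →L[𝕜] A) where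
  carrier := LeftCentralizers 𝕜 A
  mul_mem' {L K} hL hK a b := by
    rw [mul_apply_eq_comp, hK, hL, mul_apply_eq_comp]
  add_mem' {L K} hL hK a b := by
    rw [add_apply, hL, hK, add_apply, add_mul]
  algebraMap_mem' c a b := by
    simp only [ContinuousLinearMap.algebraMap_apply, smul_mul_assoc]

/-- The canonical map `λ : A → M_l(A)`, sending `a` to left multiplication by `a`. -/
noncomputable def leftMulCentralizer (a : A) : leftCentralizerAlgebra 𝕜 A :=
  ⟨ContinuousLinearMap.mul 𝕜 A a, fun b c => (mul_assoc a b c).symm⟩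

variable {𝕜}

theorem mul_leftMulCentralizer (L : leftCentralizerAlgebra 𝕜 A) (a : A) :
    L * leftMulCentralizer 𝕜 a = leftMulCentralizer 𝕜 (L.1 a) := by
  ext b
  exact L.2 a b

variable {X : Type*} [NormedAddCommGroup X] [NormedSpace 𝕜 X] {π : A →L[𝕜] X →L[𝕜] X}
  {πb : leftCentralizerAlgebra 𝕜 A → X →L[𝕜] X}

/-- A map `π̄ : M_l(A) → B(X)` with `π̄ L * π a = π (L a)`, bundled as an algebra homomorphism:
when `π` is non-degenerate, this identity alone implies that `π̄` is linear, multiplicative and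
unital. -/
def centralizerAlgHom
    (hnd : Dense (Submodule.span 𝕜 (Set.range fun p : A × X => π p.1 p.2) : Set X))
    (hπb : ∀ L a, πb L * π a = π (L.1 a)) :
    leftCentralizerAlgebra 𝕜 A →ₐ[𝕜] X →L[𝕜] X :=
  .ofLinearMap
    { toFun := πb
      map_add' L K := eq_of_forall_mul_eq_of_dense_span hnd fun a => by
        simp only [add_mul, hπb, Subalgebra.coe_add, add_apply, map_add]
      map_smul' c L := eq_of_forall_mul_eq_of_dense_span hnd fun a => by
        simp only [smul_mul_assoc, hπb, Subalgebra.coe_smul, smul_apply, map_smul,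
          RingHom.id_apply] }
    (eq_of_forall_mul_eq_of_dense_span hnd fun a => by
      simp only [LinearMap.coe_mk, AddHom.coe_mk, hπb, Subalgebra.coe_one, one_apply_eq_self,
        one_mul])
    (fun L K => eq_of_forall_mul_eq_of_dense_span hnd fun a => by
      simp only [LinearMap.coe_mk, AddHom.coe_mk, mul_assoc, hπb, Subalgebra.coe_mul,
        mul_apply_eq_comp])

theorem apply_leftMulCentralizer
    (hnd : Dense (Submodule.span 𝕜 (Set.range fun p : A × X => π p.1 p.2) : Set X))
    (hπb : ∀ L a, πb L * π a = π (L.1 a))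
    (hπmul : ∀ a b, π (a * b) = π a * π b) (a : A) :
    πb (leftMulCentralizer 𝕜 a) = π a :=
  eq_of_forall_mul_eq_of_dense_span hnd fun b => (hπb _ b).trans (hπmul a b)

theorem eq_of_map_mul_of_apply_leftMulCentralizer
    (hnd : Dense (Submodule.span 𝕜 (Set.range fun p : A × X => π p.1 p.2) : Set X))
    (hπb : ∀ L a, πb L * π a = π (L.1 a))
    {σ : leftCentralizerAlgebra 𝕜 A → X →L[𝕜] X}
    (hσ_mul : ∀ L K, σ (L * K) = σ L * σ K) (hσ : ∀ a, σ (leftMulCentralizer 𝕜 a) = π a) :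
    σ = πb :=
  funext fun L => eq_of_forall_mul_eq_of_dense_span hnd fun a =>
    calc σ L * π a = σ (L * leftMulCentralizer 𝕜 a) := by rw [hσ_mul, hσ]
      _ = π (L.1 a) := by rw [mul_leftMulCentralizer, hσ]
      _ = πb L * π a := (hπb L a).symm

end LeftCentralizerAlgebra

/-- **Module structures for the left centralizer algebra.** Let `A` be a normed algebra with
an `m`-bounded approximate left identity, `X` a Banach space, and `π_l : A → B(X)` a bounded
algebra homomorphism making `X` a non-degenerate normed left `A`-module. Then there is a
unique algebra homomorphism `π̄_l : M_l(A) → B(X)` with `π̄_l ∘ λ = π_l`; it is unital and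
bounded with `‖π̄_l‖ ≤ m‖π_l‖`, `X` becomes a non-degenerate normed left `M_l(A)`-module,
`π̄_l(L)π_l(a) = π_l(L(a))` for all `L ∈ M_l(A)` and `a ∈ A`, and for any bounded approximate
left identity `(e_i)` of `A` one has `π_l(e_i) → id_X` and `π̄_l(L) = SOT-lim π_l(L(e_i))`. -/
theorem left_centralizer_module
    {𝕜 : Type*} [RCLike 𝕜]
    {A : Type*} [NonUnitalNormedRing A] [NormedSpace 𝕜 A]
    [IsScalarTower 𝕜 A A] [SMulCommClass 𝕜 A A]
    {X : Type*} [NormedAddCommGroup X] [NormedSpace 𝕜 X] [CompleteSpace X]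
    (m : ℝ) {ι : Type*} (l : Filter ι) [l.NeBot] (e : ι → A)
    (he_bdd : ∀ i, ‖e i‖ ≤ m)
    (he_lim : ∀ a : A, Tendsto (fun i => e i * a) l (𝓝 a))
    (π : A →L[𝕜] X →L[𝕜] X)
    (hπmul : ∀ a b : A, π (a * b) = π a * π b)
    (hnd : Dense (Submodule.span 𝕜 (Set.range fun p : A × X => π p.1 p.2) : Set X)) :
    ∃ πb : LeftCentralizers 𝕜 A → X →L[𝕜] X,
      -- `π̄_l` is an algebra homomorphism with `π̄_l ∘ λ = π_l` ...
      ((∀ (L K : LeftCentralizers 𝕜 A) (h : (L : A →L[𝕜] A) + K ∈ LeftCentralizers 𝕜 A),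
          πb ⟨(L : A →L[𝕜] A) + K, h⟩ = πb L + πb K) ∧
        (∀ (c : 𝕜) (L : LeftCentralizers 𝕜 A)
          (h : c • (L : A →L[𝕜] A) ∈ LeftCentralizers 𝕜 A),
          πb ⟨c • (L : A →L[𝕜] A), h⟩ = c • πb L) ∧
        (∀ (L K : LeftCentralizers 𝕜 A) (h : (L : A →L[𝕜] A) * K ∈ LeftCentralizers 𝕜 A),
          πb ⟨(L : A →L[𝕜] A) * K, h⟩ = πb L * πb K) ∧
        (∀ (a : A) (h : ContinuousLinearMap.mul 𝕜 A a ∈ LeftCentralizers 𝕜 A),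
          πb ⟨ContinuousLinearMap.mul 𝕜 A a, h⟩ = π a)) ∧
      -- ... which is unital,
      (∀ h : (1 : A →L[𝕜] A) ∈ LeftCentralizers 𝕜 A, πb ⟨1, h⟩ = 1) ∧
      -- bounded with `‖π̄_l‖ ≤ m ‖π_l‖`,
      (∀ L : LeftCentralizers 𝕜 A, ‖πb L‖ ≤ m * ‖π‖ * ‖(L : A →L[𝕜] A)‖) ∧
      -- makes `X` a non-degenerate normed left `M_l(A)`-module,
      Dense (Submodule.span 𝕜
        (Set.range fun p : LeftCentralizers 𝕜 A × X => πb p.1 p.2) : Set X) ∧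
      -- satisfies `π̄_l(L) π_l(a) = π_l(L(a))` (so `π_l(A)` is a left ideal in the image),
      (∀ (L : LeftCentralizers 𝕜 A) (a : A), πb L * π a = π ((L : A →L[𝕜] A) a)) ∧
      -- and satisfies the SOT statements for every bounded approximate left identity,
      (∀ (κ : Type*) (l' : Filter κ), l'.NeBot → ∀ (e' : κ → A) (m' : ℝ),
        (∀ i, ‖e' i‖ ≤ m') →
        (∀ a : A, Tendsto (fun i => e' i * a) l' (𝓝 a)) →
        (∀ x : X, Tendsto (fun i => π (e' i) x) l' (𝓝 x)) ∧
        (∀ (L : LeftCentralizers 𝕜 A) (x : X),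
          Tendsto (fun i => π ((L : A →L[𝕜] A) (e' i)) x) l' (𝓝 (πb L x)))) ∧
      -- moreover `π̄_l` is the unique such algebra homomorphism:
      (∀ σ : LeftCentralizers 𝕜 A → X →L[𝕜] X,
        ((∀ (L K : LeftCentralizers 𝕜 A)
            (h : (L : A →L[𝕜] A) + K ∈ LeftCentralizers 𝕜 A),
            σ ⟨(L : A →L[𝕜] A) + K, h⟩ = σ L + σ K) ∧
          (∀ (c : 𝕜) (L : LeftCentralizers 𝕜 A)
            (h : c • (L : A →L[𝕜] A) ∈ LeftCentralizers 𝕜 A),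
            σ ⟨c • (L : A →L[𝕜] A), h⟩ = c • σ L) ∧
          (∀ (L K : LeftCentralizers 𝕜 A)
            (h : (L : A →L[𝕜] A) * K ∈ LeftCentralizers 𝕜 A),
            σ ⟨(L : A →L[𝕜] A) * K, h⟩ = σ L * σ K) ∧
          (∀ (a : A) (h : ContinuousLinearMap.mul 𝕜 A a ∈ LeftCentralizers 𝕜 A),
            σ ⟨ContinuousLinearMap.mul 𝕜 A a, h⟩ = π a)) → σ = πb) := by
  have exists_strong_limit (L : leftCentralizerAlgebra 𝕜 A) :=
    exists_strong_limit_of_centralizer hπmul hnd he_bdd he_lim L.2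
  choose πb hπb hπb_norm _ using exists_strong_limit
  let Φ := centralizerAlgHom hnd hπb
  refine ⟨πb, ⟨fun L K _ => map_add Φ ⟨L, L.2⟩ ⟨K, K.2⟩, fun c L _ => map_smul Φ c ⟨L, L.2⟩,
      fun L K _ => map_mul Φ ⟨L, L.2⟩ ⟨K, K.2⟩,
      fun a _ => apply_leftMulCentralizer hnd hπb hπmul a⟩,
    fun _ => map_one Φ, hπb_norm, dense_span_range_algHom_apply Φ, hπb, ?_, ?_⟩
  · intro κ l' _ e' m' he'_bdd he'_lim
    refine ⟨?_, fun L => tendsto_of_forall_mul_eq_centralizer_apply hπmul hnd he'_bdd he'_lim L.2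
      (hπb ⟨L, L.2⟩)⟩
    exact tendsto_of_forall_mul_eq_centralizer_apply (L := 1) (S := 1) hπmul hnd he'_bdd he'_lim
      (fun _ _ => rfl) fun a => one_mul (π a)
  · rintro σ ⟨-, -, hσ_mul, hσ⟩
    exact eq_of_map_mul_of_apply_leftMulCentralizer hnd hπb
      (fun L K => hσ_mul ⟨L, L.2⟩ ⟨K, K.2⟩ (L * K).2) fun a => hσ a (leftMulCentralizer 𝕜 a).2
end

section
/- Let A be a normed algebra with an m-bounded approximate right identity, let X be a Banach space, and let π_r : A → B(X) be a bounded algebra anti-homomorphism making X a non-degenerate normed right A-module. Then there exists a unique algebra HOMOMORPHISM π̄_r : M_r(A) → B(X) such that π̄_r ∘ ρ = π_r, where ρ : A → M_r(A) is the canonical anti-homomorphism. This π̄_r is unital and bounded with ‖π̄_r‖ ≤ m‖π_r‖, so X becomes a non-degenerate normed LEFT M_r(A)-module; moreover π̄_r(R)π_r(a) = π_r(R(a)) for all R ∈ M_r(A), a ∈ A, and for any bounded approximate right identity (e_i) of A one has π_r(e_i) → id_X and π̄_r(R) = lim_i π_r(R(e_i)) in the strong operator topology. -/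
open Filter Topology

/-- A right centralizer of a normed algebra `A`: a bounded operator `R` on `A` with
`R(ab) = aR(b)`. The right centralizer algebra `M_r(A)` is the set of all of these. -/
def RightCentralizers (𝕜 : Type*) (A : Type*) [RCLike 𝕜] [NonUnitalNormedRing A]
    [NormedSpace 𝕜 A] [IsScalarTower 𝕜 A A] [SMulCommClass 𝕜 A A] :
    Set (A →L[𝕜] A) :=
  {R | ∀ a b : A, R (a * b) = a * R b}

/-!
The action is forced on the vectors `π a x`: a multiplicative extension `σ` of `π` along `ρ` sends
`π a x = σ (ρ a) x` to `σ (R * ρ a) x = σ (ρ (R a)) x = π (R a) x`, and such vectors span a dense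
subspace. To see that this rule defines a bounded operator, consider the linear map
`μ : A ⊗ X → X`, `a ⊗ x ↦ π a x`. Since `R (a * e i) = a * R (e i)`, the operators `π (R (e i))`
send `μ t` to vectors converging to `μ ((R ⊗ 1) t)`; their norms are at most `m ‖π‖ ‖R‖`, hence
`‖μ ((R ⊗ 1) t)‖ ≤ m ‖π‖ ‖R‖ ‖μ t‖`, and `μ t ↦ μ ((R ⊗ 1) t)` extends by continuity to `X`.
-/

section NormedSpaces

open scoped TensorProduct

variable {𝕜 E X Y Z κ : Type*} [NontriviallyNormedField 𝕜]

theorem tendsto_apply_of_dense_of_norm_le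
    [SeminormedAddCommGroup X] [NormedSpace 𝕜 X] [SeminormedAddCommGroup Y] [NormedSpace 𝕜 Y]
    {l : Filter κ} {T : κ → X →L[𝕜] Y} {S : X →L[𝕜] Y} {C : ℝ} {s : Set X}
    (hT : ∀ i, ‖T i‖ ≤ C) (hs : Dense s) (hlim : ∀ x ∈ s, Tendsto (fun i => T i x) l (𝓝 (S x)))
    (x : X) : Tendsto (fun i => T i x) l (𝓝 (S x)) := by
  have hequi : Equicontinuous fun i => ⇑(T i) :=
    ((NormedSpace.equicontinuous_TFAE T).out 5 1 :
      (∃ C, ∀ i, ‖T i‖ ≤ C) ↔ Equicontinuous fun i => ⇑(T i)).1 ⟨C, hT⟩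
  exact hs.induction hlim (hequi.isClosed_setOfPred_tendsto S.continuous) x

variable [SeminormedAddCommGroup E] [NormedSpace 𝕜 E] [SeminormedAddCommGroup X] [NormedSpace 𝕜 X]

section ActionMap

variable [SeminormedAddCommGroup Y] [NormedSpace 𝕜 Y] {π : E →L[𝕜] X →L[𝕜] Y}

variable (π) in
/-- The linear map `a ⊗ x ↦ π a x` induced by a bounded bilinear map `π`, here the action of an
algebra on a module. Its range is the span of the vectors `π a x`. -/
noncomputable def actionMap : E ⊗[𝕜] X →ₗ[𝕜] Y :=
  TensorProduct.lift π.toLinearMap₁₂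

@[simp]
theorem actionMap_tmul (a : E) (x : X) : actionMap π (a ⊗ₜ x) = π a x :=
  TensorProduct.lift.tmul a x

theorem denseRange_actionMap
    (hπ : Dense (Submodule.span 𝕜 (Set.range fun p : E × X => π p.1 p.2) : Set Y)) :
    DenseRange (actionMap π) := by
  have hspan : Submodule.span 𝕜 (Set.range fun p : E × X => π p.1 p.2) ≤
      LinearMap.range (actionMap π) :=
    Submodule.span_le.2 <| Set.range_subset_iff.2 fun p => ⟨p.1 ⊗ₜ p.2, actionMap_tmul p.1 p.2⟩
  exact hπ.mono hspan

theorem ext_of_dense_span_range [NormedAddCommGroup Z] [NormedSpace 𝕜 Z] {S T : Y →L[𝕜] Z}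
    (hπ : Dense (Submodule.span 𝕜 (Set.range fun p : E × X => π p.1 p.2) : Set Y))
    (h : ∀ a x, S (π a x) = T (π a x)) : S = T :=
  ContinuousLinearMap.ext_on hπ <| Set.forall_mem_range.2 fun p => h p.1 p.2

theorem norm_map_apply_le_of_norm_le {R : E →L[𝕜] E} {a : E} {m : ℝ} (ha : ‖a‖ ≤ m) :
    ‖π (R a)‖ ≤ m * ‖π‖ * ‖R‖ :=
  calc ‖π (R a)‖ ≤ ‖π‖ * (‖R‖ * m) := π.le_opNorm_of_le (R.le_opNorm_of_le ha)
    _ = m * ‖π‖ * ‖R‖ := by ring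

end ActionMap

/-- The operator with `π a x ↦ π (R a) x`, obtained by continuous extension. It has a junk value
when this rule is not well defined and bounded on the span of the vectors `π a x`. -/
noncomputable def liftOperator [NormedAddCommGroup Y] [NormedSpace 𝕜 Y] [CompleteSpace Y]
    (π : E →L[𝕜] X →L[𝕜] Y) (R : E →L[𝕜] E) : Y →L[𝕜] Y :=
  (actionMap π ∘ₗ R.toLinearMap.rTensor X).extendOfNorm (actionMap π)

end NormedSpaces

section Modules

/-- `(e i)` is an approximate right identity along the filter `l`, bounded by `m`. Nets are the case
where `l` is the filter `atTop` of a directed set. -/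
structure IsBoundedApproxRightIdentity {A ι : Type*} [NonUnitalSeminormedRing A]
    (l : Filter ι) (e : ι → A) (m : ℝ) : Prop where
  norm_le : ∀ i, ‖e i‖ ≤ m
  tendsto_mul : ∀ a, Tendsto (fun i => a * e i) l (𝓝 a)

/-- `π` is an anti-homomorphism making `X` a non-degenerate normed right `A`-module. -/
structure IsNondegenerateRightAction {𝕜 A X : Type*} [NontriviallyNormedField 𝕜]
    [NonUnitalSeminormedRing A] [NormedSpace 𝕜 A] [SeminormedAddCommGroup X] [NormedSpace 𝕜 X]
    (π : A →L[𝕜] X →L[𝕜] X) : Prop where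
  protected map_mul : ∀ a b, π (a * b) = π b * π a
  dense_span : Dense (Submodule.span 𝕜 (Set.range fun p : A × X => π p.1 p.2) : Set X)

variable {𝕜 A X ι : Type*} [RCLike 𝕜] [NonUnitalNormedRing A] [NormedSpace 𝕜 A]
  [IsScalarTower 𝕜 A A] [SMulCommClass 𝕜 A A]

namespace RightCentralizers

variable (𝕜 A) in
/-- The right centralizer algebra `M_r(A)`, bundled as a subalgebra of `B(A)`. -/
def subalgebra : Subalgebra 𝕜 (A →L[𝕜] A) where
  carrier := RightCentralizers 𝕜 A
  mul_mem' {R S} hR hS a b := by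
    rw [mul_apply_eq_comp, hS, hR, mul_apply_eq_comp]
  add_mem' {R S} hR hS a b := by
    rw [add_apply, hR, hS, add_apply, mul_add]
  algebraMap_mem' c a b := by
    simp only [Algebra.algebraMap_eq_smul_one, smul_apply, one_apply_eq_self,
      mul_smul_comm]

variable (𝕜) in
/-- The canonical map `ρ : A → M_r(A)`, `ρ(a) b = b a`. -/
noncomputable def rho (a : A) : subalgebra 𝕜 A :=
  ⟨(ContinuousLinearMap.mul 𝕜 A).flip a, fun b c => mul_assoc b c a⟩

theorem mul_rho (R : subalgebra 𝕜 A) (a : A) : R * rho 𝕜 a = rho 𝕜 (R.1 a) :=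
  Subtype.ext <| ContinuousLinearMap.ext fun b => R.2 b a

end RightCentralizers

namespace IsNondegenerateRightAction

open RightCentralizers TensorProduct

variable [NormedAddCommGroup X] [NormedSpace 𝕜 X] {π : A →L[𝕜] X →L[𝕜] X} {R S : A →L[𝕜] A}
  {l : Filter ι} {e : ι → A} {m : ℝ}

theorem tendsto_actionMap (hπ : IsNondegenerateRightAction π)
    (he : IsBoundedApproxRightIdentity l e m) (hR : R ∈ RightCentralizers 𝕜 A) (t : A ⊗[𝕜] X) :
    Tendsto (fun i => π (R (e i)) (actionMap π t)) l
      (𝓝 (actionMap π (R.toLinearMap.rTensor X t))) := by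
  induction t with
  | zero => simpa only [map_zero] using tendsto_const_nhds
  | add s t hs ht => simpa only [map_add] using hs.add ht
  | tmul a x =>
    have hcont : Continuous fun b => π (R b) x := by fun_prop
    have hlim := (hcont.tendsto a).comp (he.tendsto_mul a)
    refine hlim.congr fun i => ?_
    simp only [Function.comp_apply, hR a (e i), hπ.map_mul, mul_apply_eq_comp, actionMap_tmul]

variable [l.NeBot]

theorem norm_actionMap_rTensor_le (hπ : IsNondegenerateRightAction π)
    (he : IsBoundedApproxRightIdentity l e m) (hR : R ∈ RightCentralizers 𝕜 A) (t : A ⊗[𝕜] X) :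
    ‖actionMap π (R.toLinearMap.rTensor X t)‖ ≤ m * ‖π‖ * ‖R‖ * ‖actionMap π t‖ :=
  le_of_tendsto (hπ.tendsto_actionMap he hR t).norm <|
    Eventually.of_forall fun i =>
      (π (R (e i))).le_of_opNorm_le (norm_map_apply_le_of_norm_le (he.norm_le i)) _

variable [CompleteSpace X]

theorem liftOperator_actionMap (hπ : IsNondegenerateRightAction π)
    (he : IsBoundedApproxRightIdentity l e m) (hR : R ∈ RightCentralizers 𝕜 A) (t : A ⊗[𝕜] X) :
    liftOperator π R (actionMap π t) = actionMap π (R.toLinearMap.rTensor X t) :=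
  LinearMap.extendOfNorm_eq (f := actionMap π ∘ₗ R.toLinearMap.rTensor X)
    (denseRange_actionMap hπ.dense_span) ⟨_, hπ.norm_actionMap_rTensor_le he hR⟩ t

theorem liftOperator_apply (hπ : IsNondegenerateRightAction π)
    (he : IsBoundedApproxRightIdentity l e m) (hR : R ∈ RightCentralizers 𝕜 A) (a : A) (x : X) :
    liftOperator π R (π a x) = π (R a) x := by
  simpa using hπ.liftOperator_actionMap he hR (a ⊗ₜ x)

theorem norm_liftOperator_le (hπ : IsNondegenerateRightAction π)
    (he : IsBoundedApproxRightIdentity l e m) (hR : R ∈ RightCentralizers 𝕜 A) :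
    ‖liftOperator π R‖ ≤ m * ‖π‖ * ‖R‖ := by
  obtain ⟨i⟩ := l.nonempty_of_neBot
  have hbound_nonneg : 0 ≤ m * ‖π‖ * ‖R‖ :=
    (norm_nonneg (π (R (e i)))).trans (norm_map_apply_le_of_norm_le (he.norm_le i))
  exact LinearMap.opNorm_extendOfNorm_le (denseRange_actionMap hπ.dense_span) hbound_nonneg
    (hπ.norm_actionMap_rTensor_le he hR)

theorem tendsto_liftOperator (hπ : IsNondegenerateRightAction π)
    (he : IsBoundedApproxRightIdentity l e m) (hR : R ∈ RightCentralizers 𝕜 A) (x : X) :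
    Tendsto (fun i => π (R (e i)) x) l (𝓝 (liftOperator π R x)) := by
  refine tendsto_apply_of_dense_of_norm_le (fun i => norm_map_apply_le_of_norm_le (he.norm_le i))
    (denseRange_actionMap hπ.dense_span) (Set.forall_mem_range.2 fun t => ?_) x
  rw [hπ.liftOperator_actionMap he hR]
  exact hπ.tendsto_actionMap he hR t

theorem liftOperator_add (hπ : IsNondegenerateRightAction π)
    (he : IsBoundedApproxRightIdentity l e m) (hR : R ∈ RightCentralizers 𝕜 A)
    (hS : S ∈ RightCentralizers 𝕜 A) :
    liftOperator π (R + S) = liftOperator π R + liftOperator π S :=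
  ext_of_dense_span_range hπ.dense_span fun a x => by
    have hRS : R + S ∈ RightCentralizers 𝕜 A := (subalgebra 𝕜 A).add_mem hR hS
    simp [hπ.liftOperator_apply he, hR, hS, hRS]

theorem liftOperator_smul (hπ : IsNondegenerateRightAction π)
    (he : IsBoundedApproxRightIdentity l e m) (c : 𝕜) (hR : R ∈ RightCentralizers 𝕜 A) :
    liftOperator π (c • R) = c • liftOperator π R :=
  ext_of_dense_span_range hπ.dense_span fun a x => by
    have hcR : c • R ∈ RightCentralizers 𝕜 A := (subalgebra 𝕜 A).smul_mem hR c
    simp [hπ.liftOperator_apply he, hR, hcR]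

theorem liftOperator_one (hπ : IsNondegenerateRightAction π)
    (he : IsBoundedApproxRightIdentity l e m) : liftOperator π (1 : A →L[𝕜] A) = 1 :=
  ext_of_dense_span_range hπ.dense_span <| hπ.liftOperator_apply he (subalgebra 𝕜 A).one_mem

theorem liftOperator_mul (hπ : IsNondegenerateRightAction π)
    (he : IsBoundedApproxRightIdentity l e m) (hR : R ∈ RightCentralizers 𝕜 A)
    (hS : S ∈ RightCentralizers 𝕜 A) :
    liftOperator π (R * S) = liftOperator π R * liftOperator π S :=
  ext_of_dense_span_range hπ.dense_span fun a x => by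
    have hRS : R * S ∈ RightCentralizers 𝕜 A := (subalgebra 𝕜 A).mul_mem hR hS
    simp [hπ.liftOperator_apply he, hR, hS, hRS]

/-- The homomorphism `π̄_r : M_r(A) → B(X)`, making `X` a left `M_r(A)`-module. The underlying
function `liftOperator π` does not involve the approximate identity. -/
noncomputable def centralizerAction (hπ : IsNondegenerateRightAction π)
    (he : IsBoundedApproxRightIdentity l e m) : subalgebra 𝕜 A →ₐ[𝕜] X →L[𝕜] X :=
  AlgHom.ofLinearMap
    { toFun := fun R => liftOperator π R.1
      map_add' := fun R S => hπ.liftOperator_add he R.2 S.2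
      map_smul' := fun c R => hπ.liftOperator_smul he c R.2 }
    (hπ.liftOperator_one he) fun R S => hπ.liftOperator_mul he R.2 S.2

theorem centralizerAction_mul_map (hπ : IsNondegenerateRightAction π)
    (he : IsBoundedApproxRightIdentity l e m) (R : subalgebra 𝕜 A) (a : A) :
    hπ.centralizerAction he R * π a = π (R.1 a) :=
  ContinuousLinearMap.ext (hπ.liftOperator_apply he R.2 a)

theorem centralizerAction_rho (hπ : IsNondegenerateRightAction π)
    (he : IsBoundedApproxRightIdentity l e m) (a : A) :
    hπ.centralizerAction he (rho 𝕜 a) = π a :=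
  ext_of_dense_span_range hπ.dense_span fun b x => by
    calc hπ.centralizerAction he (rho 𝕜 a) (π b x) = π (b * a) x :=
          hπ.liftOperator_apply he (rho 𝕜 a).2 b x
      _ = π a (π b x) := by rw [hπ.map_mul, mul_apply_eq_comp]

theorem dense_span_centralizerAction (hπ : IsNondegenerateRightAction π)
    (he : IsBoundedApproxRightIdentity l e m) :
    Dense (Submodule.span 𝕜 (Set.range fun p : subalgebra 𝕜 A × X =>
      hπ.centralizerAction he p.1 p.2) : Set X) := by
  refine hπ.dense_span.mono (Submodule.span_mono (Set.range_subset_iff.2 fun p => ?_))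
  exact ⟨(rho 𝕜 p.1, p.2), DFunLike.congr_fun (hπ.centralizerAction_rho he p.1) p.2⟩

theorem eq_centralizerAction (hπ : IsNondegenerateRightAction π)
    (he : IsBoundedApproxRightIdentity l e m) (σ : subalgebra 𝕜 A →ₙ* (X →L[𝕜] X))
    (hσ : ∀ a, σ (rho 𝕜 a) = π a) (R : subalgebra 𝕜 A) :
    σ R = hπ.centralizerAction he R := by
  refine ext_of_dense_span_range hπ.dense_span fun a x => ?_
  have hσR : σ R * π a = hπ.centralizerAction he R * π a :=
    calc σ R * π a = σ (R * rho 𝕜 a) := by rw [map_mul, hσ]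
      _ = π (R.1 a) := by rw [mul_rho, hσ]
      _ = hπ.centralizerAction he R * π a := (hπ.centralizerAction_mul_map he R a).symm
  exact DFunLike.congr_fun hσR x

end IsNondegenerateRightAction

end Modules

/-- **Module structures for the right centralizer algebra.** Let `A` be a normed algebra with
an `m`-bounded approximate right identity, `X` a Banach space, and let the bounded algebra
anti-homomorphism `π_r : A → B(X)` make `X` a non-degenerate normed right `A`-module. Then
there is a unique algebra HOMOMORPHISM `π̄_r : M_r(A) → B(X)` with `π̄_r ∘ ρ = π_r` (where
`ρ(a)b = ba`); it is unital and bounded with `‖π̄_r‖ ≤ m‖π_r‖`, so `X` becomes a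
non-degenerate normed LEFT `M_r(A)`-module; moreover `π̄_r(R)π_r(a) = π_r(R(a))`, and for any
bounded approximate right identity `(e_i)` of `A` one has `π_r(e_i) → id_X` and
`π̄_r(R) = SOT-lim π_r(R(e_i))`. -/
theorem right_centralizer_module
    {𝕜 : Type*} [RCLike 𝕜]
    {A : Type*} [NonUnitalNormedRing A] [NormedSpace 𝕜 A]
    [IsScalarTower 𝕜 A A] [SMulCommClass 𝕜 A A]
    {X : Type*} [NormedAddCommGroup X] [NormedSpace 𝕜 X] [CompleteSpace X]
    (m : ℝ) {ι : Type*} (l : Filter ι) [l.NeBot] (e : ι → A)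
    (he_bdd : ∀ i, ‖e i‖ ≤ m)
    (he_lim : ∀ a : A, Tendsto (fun i => a * e i) l (𝓝 a))
    (π : A →L[𝕜] X →L[𝕜] X)
    (hπmul : ∀ a b : A, π (a * b) = π b * π a)
    (hnd : Dense (Submodule.span 𝕜 (Set.range fun p : A × X => π p.1 p.2) : Set X)) :
    ∃ πb : RightCentralizers 𝕜 A → X →L[𝕜] X,
      -- `π̄_r` is an algebra homomorphism with `π̄_r ∘ ρ = π_r` ...
      ((∀ (R S : RightCentralizers 𝕜 A) (h : (R : A →L[𝕜] A) + S ∈ RightCentralizers 𝕜 A),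
          πb ⟨(R : A →L[𝕜] A) + S, h⟩ = πb R + πb S) ∧
        (∀ (c : 𝕜) (R : RightCentralizers 𝕜 A)
          (h : c • (R : A →L[𝕜] A) ∈ RightCentralizers 𝕜 A),
          πb ⟨c • (R : A →L[𝕜] A), h⟩ = c • πb R) ∧
        (∀ (R S : RightCentralizers 𝕜 A)
          (h : (R : A →L[𝕜] A) * S ∈ RightCentralizers 𝕜 A),
          πb ⟨(R : A →L[𝕜] A) * S, h⟩ = πb R * πb S) ∧
        (∀ (a : A) (h : (ContinuousLinearMap.mul 𝕜 A).flip a ∈ RightCentralizers 𝕜 A),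
          πb ⟨(ContinuousLinearMap.mul 𝕜 A).flip a, h⟩ = π a)) ∧
      -- ... which is unital,
      (∀ h : (1 : A →L[𝕜] A) ∈ RightCentralizers 𝕜 A, πb ⟨1, h⟩ = 1) ∧
      -- bounded with `‖π̄_r‖ ≤ m ‖π_r‖`,
      (∀ R : RightCentralizers 𝕜 A, ‖πb R‖ ≤ m * ‖π‖ * ‖(R : A →L[𝕜] A)‖) ∧
      -- makes `X` a non-degenerate normed left `M_r(A)`-module,
      Dense (Submodule.span 𝕜
        (Set.range fun p : RightCentralizers 𝕜 A × X => πb p.1 p.2) : Set X) ∧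
      -- satisfies `π̄_r(R) π_r(a) = π_r(R(a))` (so `π_r(A)` is a left ideal in the image),
      (∀ (R : RightCentralizers 𝕜 A) (a : A), πb R * π a = π ((R : A →L[𝕜] A) a)) ∧
      -- and satisfies the SOT statements for every bounded approximate right identity,
      (∀ (κ : Type*) (l' : Filter κ), l'.NeBot → ∀ (e' : κ → A) (m' : ℝ),
        (∀ i, ‖e' i‖ ≤ m') →
        (∀ a : A, Tendsto (fun i => a * e' i) l' (𝓝 a)) →
        (∀ x : X, Tendsto (fun i => π (e' i) x) l' (𝓝 x)) ∧
        (∀ (R : RightCentralizers 𝕜 A) (x : X),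
          Tendsto (fun i => π ((R : A →L[𝕜] A) (e' i)) x) l' (𝓝 (πb R x)))) ∧
      -- moreover `π̄_r` is the unique such algebra homomorphism:
      (∀ σ : RightCentralizers 𝕜 A → X →L[𝕜] X,
        ((∀ (R S : RightCentralizers 𝕜 A)
            (h : (R : A →L[𝕜] A) + S ∈ RightCentralizers 𝕜 A),
            σ ⟨(R : A →L[𝕜] A) + S, h⟩ = σ R + σ S) ∧
          (∀ (c : 𝕜) (R : RightCentralizers 𝕜 A)
            (h : c • (R : A →L[𝕜] A) ∈ RightCentralizers 𝕜 A),
            σ ⟨c • (R : A →L[𝕜] A), h⟩ = c • σ R) ∧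
          (∀ (R S : RightCentralizers 𝕜 A)
            (h : (R : A →L[𝕜] A) * S ∈ RightCentralizers 𝕜 A),
            σ ⟨(R : A →L[𝕜] A) * S, h⟩ = σ R * σ S) ∧
          (∀ (a : A) (h : (ContinuousLinearMap.mul 𝕜 A).flip a ∈ RightCentralizers 𝕜 A),
            σ ⟨(ContinuousLinearMap.mul 𝕜 A).flip a, h⟩ = π a)) → σ = πb) := by
  have hπ : IsNondegenerateRightAction π := ⟨hπmul, hnd⟩
  have he : IsBoundedApproxRightIdentity l e m := ⟨he_bdd, he_lim⟩
  let πb : RightCentralizers.subalgebra 𝕜 A →ₐ[𝕜] X →L[𝕜] X := hπ.centralizerAction he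
  refine ⟨πb, ⟨fun R S _ => πb.map_add R S, fun c R _ => πb.toLinearMap.map_smul c R,
    fun R S _ => πb.map_mul R S, fun a _ => hπ.centralizerAction_rho he a⟩,
    fun _ => πb.map_one, fun R => hπ.norm_liftOperator_le he R.2,
    hπ.dense_span_centralizerAction he, hπ.centralizerAction_mul_map he, ?_, ?_⟩
  · intro κ l' _ e' m' he'_bdd he'_lim
    have hSOT (R : RightCentralizers 𝕜 A) (x : X) :
        Tendsto (fun i => π (R.1 (e' i)) x) l' (𝓝 (πb R x)) :=
      hπ.tendsto_liftOperator ⟨he'_bdd, he'_lim⟩ R.2 x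
    refine ⟨fun x => ?_, hSOT⟩
    have hid := hSOT (1 : RightCentralizers.subalgebra 𝕜 A) x
    rwa [map_one] at hid
  · rintro σ ⟨-, -, hσmul, hσρ⟩
    exact funext <| hπ.eq_centralizerAction he ⟨σ, fun R S => hσmul R S (R * S).2⟩
      fun a => hσρ a (RightCentralizers.rho 𝕜 a).2
end

section
/- Let A be a normed algebra with an m-bounded approximate left identity, let X be a Banach space, and let π_l : A → B(X) be a bounded algebra homomorphism making X a non-degenerate normed left A-module. Then π̄_l ∘ φ_l : M(A) → B(X) is the unique algebra homomorphism α : M(A) → B(X) with α ∘ δ = π_l, where δ : A → M(A) is the canonical homomorphism. It is unital and bounded with ‖π̄_l ∘ φ_l‖ ≤ m‖π_l‖, making X a non-degenerate normed left M(A)-module; π_l(A) is a two-sided ideal in (π̄_l∘φ_l)(M(A)), with (π̄_l∘φ_l)((L,R))π_l(a) = π_l(L(a)) and π_l(a)(π̄_l∘φ_l)((L,R)) = π_l(R(a)) for all (L,R) ∈ M(A), a ∈ A; and for any bounded approximate left identity (e_i) of A, (π̄_l∘φ_l)((L,R)) = lim_i π_l(L(e_i)) in the strong operator topology. -/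
open Filter Topology

/-- `(L, R)` is a double centralizer of `A`: `L ∈ M_l(A)`, `R ∈ M_r(A)`, and
`a L(b) = R(a) b` for all `a, b ∈ A`. -/
def IsDoubleCentralizer (𝕜 : Type*) {A : Type*} [RCLike 𝕜] [NonUnitalNormedRing A]
    [NormedSpace 𝕜 A] [IsScalarTower 𝕜 A A] [SMulCommClass 𝕜 A A]
    (L R : A →L[𝕜] A) : Prop :=
  L ∈ LeftCentralizers 𝕜 A ∧ R ∈ RightCentralizers 𝕜 A ∧ ∀ a b : A, a * L b = R a * b

/-!
An operator `T` on `X` *implements* a linear map `L : A → A` if `T (π a x) = π (L a) x`. When `X`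
is non-degenerate at most one operator implements a given `L`. Since `L ∘ λ(a) = λ(L a)` for a left
centralizer `L`, and `(L, R) δ(a) = δ(L a)` for a double centralizer, every multiplicative extension
of `π` sends `L`, respectively `(L, R)`, to an operator implementing `L`; this gives uniqueness.
The limit formula is `T x = lim T (π (e i) x) = lim π (L (e i)) x`, and the norm bound follows
from it.
-/

section StrongLimits

variable {𝕜 E F ι : Type*} [NontriviallyNormedField 𝕜]
  [SeminormedAddCommGroup E] [NormedSpace 𝕜 E] [SeminormedAddCommGroup F] [NormedSpace 𝕜 F]

theorem tendsto_apply_of_dense_span {l : Filter ι} {T : ι → E →L[𝕜] F} {S : E →L[𝕜] F} {C : ℝ}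
    {s : Set E} (hT : ∀ i, ‖T i‖ ≤ C) (hs : Dense (Submodule.span 𝕜 s : Set E))
    (hlim : ∀ x ∈ s, Tendsto (fun i => T i x) l (𝓝 (S x))) (x : E) :
    Tendsto (fun i => T i x) l (𝓝 (S x)) := by
  have hbdd : ∃ C, ∀ i, ‖T i‖ ≤ C := ⟨C, hT⟩
  have hequi : Equicontinuous fun i => ⇑(T i) :=
    ((NormedSpace.equicontinuous_TFAE T).out 5 1).1 hbdd
  refine hs.induction (fun y hy => ?_) (hequi.isClosed_setOfPred_tendsto S.continuous) x
  induction hy using Submodule.span_induction with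
  | mem y hy => exact hlim y hy
  | zero => simpa only [map_zero] using tendsto_const_nhds
  | add y z _ _ hy hz => simpa only [map_add] using hy.add hz
  | smul c y _ hy => simpa only [map_smul] using hy.const_smul c

end StrongLimits

section Action

variable {𝕜 A X : Type*} [NontriviallyNormedField 𝕜]
  [SeminormedAddCommGroup A] [NormedSpace 𝕜 A] [NormedAddCommGroup X] [NormedSpace 𝕜 X]

/-- The action `π` of `A` on `X` is non-degenerate: the vectors `π a x` span a dense subspace. -/
def IsNondegenerateAction (π : A →L[𝕜] X →L[𝕜] X) : Prop :=
  Dense (Submodule.span 𝕜 (Set.range fun p : A × X => π p.1 p.2) : Set X)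

/-- The operator `T` on `X` implements the map `L` on `A`, that is, `T ∘ π a = π (L a)` for all `a`.
This characterizes the value at `L` of an extension of `π` to left centralizers. -/
def Implements (π : A →L[𝕜] X →L[𝕜] X) (L : A →L[𝕜] A) (T : X →L[𝕜] X) : Prop :=
  ∀ (a : A) (x : X), T (π a x) = π (L a) x

variable {π : A →L[𝕜] X →L[𝕜] X} {L : A →L[𝕜] A} {S T : X →L[𝕜] X}

theorem IsNondegenerateAction.clm_ext (hnd : IsNondegenerateAction π)
    (h : ∀ (a : A) (x : X), S (π a x) = T (π a x)) : S = T :=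
  ContinuousLinearMap.ext_on hnd (Set.forall_mem_range.2 fun p => h p.1 p.2)

theorem Implements.unique (hnd : IsNondegenerateAction π) (hS : Implements π L S)
    (hT : Implements π L T) : S = T :=
  hnd.clm_ext fun a x => (hS a x).trans (hT a x).symm

theorem implements_one : Implements π 1 1 := fun _ _ => rfl

end Action

/-- The net `e`, indexed by `ι` and directed by the filter `l`, is an `m`-bounded approximate left
identity of `A`. -/
structure IsBoundedApproxLeftIdentity {A ι : Type*} [NonUnitalNormedRing A] (l : Filter ι)
    (e : ι → A) (m : ℝ) : Prop where
  norm_le : ∀ i, ‖e i‖ ≤ m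
  tendsto_mul : ∀ a : A, Tendsto (fun i => e i * a) l (𝓝 a)

section AlgebraAction

variable {𝕜 A X ι : Type*} [NontriviallyNormedField 𝕜]
  [NonUnitalNormedRing A] [NormedSpace 𝕜 A] [NormedAddCommGroup X] [NormedSpace 𝕜 X]
  {π : A →L[𝕜] X →L[𝕜] X} {L : A →L[𝕜] A} {T : X →L[𝕜] X} {l : Filter ι} {e : ι → A} {m : ℝ}

theorem IsBoundedApproxLeftIdentity.bound_nonneg [l.NeBot]
    (he : IsBoundedApproxLeftIdentity l e m) : 0 ≤ m :=
  have ⟨i⟩ := l.nonempty_of_neBot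
  (norm_nonneg _).trans (he.norm_le i)

theorem IsBoundedApproxLeftIdentity.tendsto_action
    (he : IsBoundedApproxLeftIdentity l e m) (hπmul : ∀ a b : A, π (a * b) = π a * π b)
    (hnd : IsNondegenerateAction π) (x : X) : Tendsto (fun i => π (e i) x) l (𝓝 x) := by
  refine tendsto_apply_of_dense_span (S := .id 𝕜 X) (fun i => π.le_opNorm_of_le (he.norm_le i))
    hnd (Set.forall_mem_range.2 fun ⟨a, y⟩ => ?_) x
  have hcont : Tendsto (fun i => π (e i * a) y) l (𝓝 (π a y)) :=
    ((π.flip y).continuous.tendsto a).comp (he.tendsto_mul a)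
  exact hcont.congr fun i => by rw [hπmul, mul_apply_eq_comp]

theorem Implements.tendsto (hT : Implements π L T)
    (he : IsBoundedApproxLeftIdentity l e m) (hπmul : ∀ a b : A, π (a * b) = π a * π b)
    (hnd : IsNondegenerateAction π) (x : X) :
    Tendsto (fun i => π (L (e i)) x) l (𝓝 (T x)) :=
  ((T.continuous.tendsto x).comp (he.tendsto_action hπmul hnd x)).congr fun i => hT (e i) x

theorem Implements.opNorm_le [l.NeBot] (hT : Implements π L T)
    (he : IsBoundedApproxLeftIdentity l e m)
    (hπmul : ∀ a b : A, π (a * b) = π a * π b) (hnd : IsNondegenerateAction π) :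
    ‖T‖ ≤ m * ‖π‖ * ‖L‖ := by
  have hm : 0 ≤ m := he.bound_nonneg
  refine T.opNorm_le_bound (by positivity) fun x => ?_
  refine le_of_tendsto (hT.tendsto he hπmul hnd x).norm (.of_forall fun i => ?_)
  calc ‖π (L (e i)) x‖ ≤ ‖π‖ * ‖L (e i)‖ * ‖x‖ := π.le_opNorm₂ _ _
    _ ≤ ‖π‖ * (‖L‖ * m) * ‖x‖ := by gcongr; exact L.le_opNorm_of_le (he.norm_le i)
    _ = m * ‖π‖ * ‖L‖ * ‖x‖ := by ring

theorem Implements.action_mul_eq {R : A →L[𝕜] A} (hT : Implements π L T)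
    (hLR : ∀ a b : A, a * L b = R a * b) (hπmul : ∀ a b : A, π (a * b) = π a * π b)
    (hnd : IsNondegenerateAction π) (a : A) : π a * T = π (R a) := by
  refine hnd.clm_ext fun b x => ?_
  calc π a (T (π b x)) = π a (π (L b) x) := by rw [hT]
    _ = π (a * L b) x := by rw [hπmul, mul_apply_eq_comp]
    _ = π (R a * b) x := by rw [hLR]
    _ = π (R a) (π b x) := by rw [hπmul, mul_apply_eq_comp]

end AlgebraAction

section Centralizers

variable {𝕜 A X : Type*} [RCLike 𝕜] [NonUnitalNormedRing A] [NormedSpace 𝕜 A]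
  [IsScalarTower 𝕜 A A] [SMulCommClass 𝕜 A A] [NormedAddCommGroup X] [NormedSpace 𝕜 X]
  {π : A →L[𝕜] X →L[𝕜] X} {L R : A →L[𝕜] A}

theorem mul_mem_leftCentralizers (a : A) :
    ContinuousLinearMap.mul 𝕜 A a ∈ LeftCentralizers 𝕜 A :=
  fun b c => (mul_assoc a b c).symm

theorem mul_mul_eq_of_mem_leftCentralizers (hL : L ∈ LeftCentralizers 𝕜 A) (a : A) :
    L * ContinuousLinearMap.mul 𝕜 A a = ContinuousLinearMap.mul 𝕜 A (L a) :=
  ContinuousLinearMap.ext fun b => hL a b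

theorem isDoubleCentralizer_one : IsDoubleCentralizer 𝕜 (1 : A →L[𝕜] A) 1 :=
  ⟨fun _ _ => rfl, fun _ _ => rfl, fun _ _ => rfl⟩

theorem isDoubleCentralizer_mul_flip_mul (a : A) :
    IsDoubleCentralizer 𝕜 (ContinuousLinearMap.mul 𝕜 A a) ((ContinuousLinearMap.mul 𝕜 A).flip a) :=
  ⟨mul_mem_leftCentralizers a, fun b c => mul_assoc b c a, fun b c => (mul_assoc b a c).symm⟩

theorem IsDoubleCentralizer.flip_mul_mul_eq (h : IsDoubleCentralizer 𝕜 L R) (a : A) :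
    (ContinuousLinearMap.mul 𝕜 A).flip a * R = (ContinuousLinearMap.mul 𝕜 A).flip (L a) :=
  ContinuousLinearMap.ext fun b => (h.2.2 b a).symm

theorem implements_of_leftCentralizers_extension {πbl : LeftCentralizers 𝕜 A → X →L[𝕜] X}
    (hmul : ∀ (L K : LeftCentralizers 𝕜 A) (h : (L : A →L[𝕜] A) * K ∈ LeftCentralizers 𝕜 A),
      πbl ⟨(L : A →L[𝕜] A) * K, h⟩ = πbl L * πbl K)
    (hlam : ∀ (a : A) (h : ContinuousLinearMap.mul 𝕜 A a ∈ LeftCentralizers 𝕜 A),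
      πbl ⟨ContinuousLinearMap.mul 𝕜 A a, h⟩ = π a)
    (hL : L ∈ LeftCentralizers 𝕜 A) : Implements π L (πbl ⟨L, hL⟩) := by
  intro a x
  have hLa := mul_mul_eq_of_mem_leftCentralizers hL a
  have hprod := hmul ⟨L, hL⟩ ⟨_, mul_mem_leftCentralizers a⟩
    (hLa ▸ mul_mem_leftCentralizers (L a))
  simp only [hLa, hlam] at hprod
  exact (DFunLike.congr_fun hprod x).symm

theorem implements_of_doubleCentralizers_extension
    {β : (A →L[𝕜] A) → (A →L[𝕜] A) → (X →L[𝕜] X)}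
    (hmul : ∀ L R L' R' : A →L[𝕜] A, IsDoubleCentralizer 𝕜 L R → IsDoubleCentralizer 𝕜 L' R' →
      β (L * L') (R' * R) = β L R * β L' R')
    (hδ : ∀ a : A,
      β (ContinuousLinearMap.mul 𝕜 A a) ((ContinuousLinearMap.mul 𝕜 A).flip a) = π a)
    (hLR : IsDoubleCentralizer 𝕜 L R) : Implements π L (β L R) := by
  intro a x
  have hprod := hmul L R _ _ hLR (isDoubleCentralizer_mul_flip_mul a)
  rw [mul_mul_eq_of_mem_leftCentralizers hLR.1, hLR.flip_mul_mul_eq, hδ, hδ] at hprod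
  exact (DFunLike.congr_fun hprod x).symm

end Centralizers

theorem double_centralizer_module_left_general
    {𝕜 : Type*} [RCLike 𝕜]
    {A : Type*} [NonUnitalNormedRing A] [NormedSpace 𝕜 A]
    [IsScalarTower 𝕜 A A] [SMulCommClass 𝕜 A A]
    {X : Type*} [NormedAddCommGroup X] [NormedSpace 𝕜 X]
    {m : ℝ} {ι : Type*} {l : Filter ι} [l.NeBot] {e : ι → A}
    (he : IsBoundedApproxLeftIdentity l e m)
    {π : A →L[𝕜] X →L[𝕜] X} (hπmul : ∀ a b : A, π (a * b) = π a * π b)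
    (hnd : IsNondegenerateAction π)
    {πbl : LeftCentralizers 𝕜 A → X →L[𝕜] X}
    (hπbl_mul : ∀ (L K : LeftCentralizers 𝕜 A)
      (h : (L : A →L[𝕜] A) * K ∈ LeftCentralizers 𝕜 A),
      πbl ⟨(L : A →L[𝕜] A) * K, h⟩ = πbl L * πbl K)
    (hπbl_lam : ∀ (a : A) (h : ContinuousLinearMap.mul 𝕜 A a ∈ LeftCentralizers 𝕜 A),
      πbl ⟨ContinuousLinearMap.mul 𝕜 A a, h⟩ = π a) :
    (∀ β : (A →L[𝕜] A) → (A →L[𝕜] A) → (X →L[𝕜] X),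
      (∀ L R L' R' : A →L[𝕜] A, IsDoubleCentralizer 𝕜 L R → IsDoubleCentralizer 𝕜 L' R' →
        β (L * L') (R' * R) = β L R * β L' R') →
      (∀ a : A, β (ContinuousLinearMap.mul 𝕜 A a) ((ContinuousLinearMap.mul 𝕜 A).flip a)
        = π a) →
      ∀ (L R : A →L[𝕜] A) (hDC : IsDoubleCentralizer 𝕜 L R), β L R = πbl ⟨L, hDC.1⟩) ∧
    (∀ h : (1 : A →L[𝕜] A) ∈ LeftCentralizers 𝕜 A, πbl ⟨1, h⟩ = 1) ∧
    (∀ (L R : A →L[𝕜] A) (hDC : IsDoubleCentralizer 𝕜 L R),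
      ‖πbl ⟨L, hDC.1⟩‖ ≤ m * ‖π‖ * max ‖L‖ ‖R‖) ∧
    Dense (Submodule.span 𝕜 {y : X | ∃ (L R : A →L[𝕜] A)
      (hDC : IsDoubleCentralizer 𝕜 L R) (x : X), πbl ⟨L, hDC.1⟩ x = y} : Set X) ∧
    (∀ (L R : A →L[𝕜] A) (hDC : IsDoubleCentralizer 𝕜 L R) (a : A),
      πbl ⟨L, hDC.1⟩ * π a = π (L a) ∧ π a * πbl ⟨L, hDC.1⟩ = π (R a)) ∧
    (∀ (κ : Type*) (l' : Filter κ) (e' : κ → A) (m' : ℝ),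
      IsBoundedApproxLeftIdentity l' e' m' →
      ∀ (L R : A →L[𝕜] A) (hDC : IsDoubleCentralizer 𝕜 L R) (x : X),
        Tendsto (fun i => π (L (e' i)) x) l' (𝓝 (πbl ⟨L, hDC.1⟩ x))) := by
  have himpl {L : A →L[𝕜] A} (hL : L ∈ LeftCentralizers 𝕜 A) : Implements π L (πbl ⟨L, hL⟩) :=
    implements_of_leftCentralizers_extension hπbl_mul hπbl_lam hL
  have hone (h : (1 : A →L[𝕜] A) ∈ LeftCentralizers 𝕜 A) : πbl ⟨1, h⟩ = 1 :=
    (himpl h).unique hnd implements_one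
  have hm : 0 ≤ m := he.bound_nonneg
  refine ⟨fun β hβmul hβδ L R hDC => ?_, hone, fun L R hDC => ?_, ?_, fun L R hDC a => ⟨?_, ?_⟩,
    fun κ l' e' m' he' L R hDC x => (himpl hDC.1).tendsto he' hπmul hnd x⟩
  · exact (implements_of_doubleCentralizers_extension hβmul hβδ hDC).unique hnd (himpl hDC.1)
  · exact ((himpl hDC.1).opNorm_le he hπmul hnd).trans (by gcongr; exact le_max_left _ _)
  · refine dense_univ.mono fun x _ => Submodule.subset_span ⟨1, 1, isDoubleCentralizer_one, x, ?_⟩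
    rw [hone, one_apply_eq_self]
  · exact ContinuousLinearMap.ext (himpl hDC.1 a)
  · exact (himpl hDC.1).action_mul_eq hDC.2.2 hπmul hnd a

/-- **Module structures for the double centralizer algebra: the left-sided case.** Let `A` be
a normed algebra with an `m`-bounded approximate left identity, `X` a Banach space, and
`π_l : A → B(X)` a bounded homomorphism making `X` a non-degenerate normed left `A`-module,
and let `π̄_l : M_l(A) → B(X)` be the canonical homomorphism with `π̄_l ∘ λ = π_l`. Then
`π̄_l ∘ φ_l : M(A) → B(X)` is the unique algebra homomorphism `α` with `α ∘ δ = π_l`; it is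
unital and bounded with norm at most `m‖π_l‖`, makes `X` a non-degenerate normed left
`M(A)`-module, satisfies `(π̄_l∘φ_l)(L,R) π_l(a) = π_l(L(a))` and
`π_l(a) (π̄_l∘φ_l)(L,R) = π_l(R(a))` (so `π_l(A)` is a two-sided ideal in the image), and
`(π̄_l∘φ_l)(L,R) = SOT-lim π_l(L(e_i))` for every bounded approximate left identity. -/
theorem double_centralizer_module_left
    {𝕜 : Type*} [RCLike 𝕜]
    {A : Type*} [NonUnitalNormedRing A] [NormedSpace 𝕜 A]
    [IsScalarTower 𝕜 A A] [SMulCommClass 𝕜 A A]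
    {X : Type*} [NormedAddCommGroup X] [NormedSpace 𝕜 X] [CompleteSpace X]
    (m : ℝ) {ι : Type*} (l : Filter ι) [l.NeBot] (e : ι → A)
    (he_bdd : ∀ i, ‖e i‖ ≤ m)
    (he_lim : ∀ a : A, Tendsto (fun i => e i * a) l (𝓝 a))
    (π : A →L[𝕜] X →L[𝕜] X)
    (hπmul : ∀ a b : A, π (a * b) = π a * π b)
    (hnd : Dense (Submodule.span 𝕜 (Set.range fun p : A × X => π p.1 p.2) : Set X))
    -- `π̄_l : M_l(A) → B(X)`, the canonical homomorphism with `π̄_l ∘ λ = π_l`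
    (πbl : LeftCentralizers 𝕜 A → X →L[𝕜] X)
    (hπbl_add : ∀ (L K : LeftCentralizers 𝕜 A)
      (h : (L : A →L[𝕜] A) + K ∈ LeftCentralizers 𝕜 A),
      πbl ⟨(L : A →L[𝕜] A) + K, h⟩ = πbl L + πbl K)
    (hπbl_smul : ∀ (c : 𝕜) (L : LeftCentralizers 𝕜 A)
      (h : c • (L : A →L[𝕜] A) ∈ LeftCentralizers 𝕜 A),
      πbl ⟨c • (L : A →L[𝕜] A), h⟩ = c • πbl L)
    (hπbl_mul : ∀ (L K : LeftCentralizers 𝕜 A)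
      (h : (L : A →L[𝕜] A) * K ∈ LeftCentralizers 𝕜 A),
      πbl ⟨(L : A →L[𝕜] A) * K, h⟩ = πbl L * πbl K)
    (hπbl_lam : ∀ (a : A) (h : ContinuousLinearMap.mul 𝕜 A a ∈ LeftCentralizers 𝕜 A),
      πbl ⟨ContinuousLinearMap.mul 𝕜 A a, h⟩ = π a) :
    -- `π̄_l ∘ φ_l` (i.e. `(L,R) ↦ π̄_l(L)`) is the unique homomorphism `α` with `α ∘ δ = π_l`:
    (∀ β : (A →L[𝕜] A) → (A →L[𝕜] A) → (X →L[𝕜] X),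
      (∀ L R L' R' : A →L[𝕜] A, IsDoubleCentralizer 𝕜 L R → IsDoubleCentralizer 𝕜 L' R' →
        β (L + L') (R + R') = β L R + β L' R') →
      (∀ (c : 𝕜) (L R : A →L[𝕜] A), IsDoubleCentralizer 𝕜 L R →
        β (c • L) (c • R) = c • β L R) →
      (∀ L R L' R' : A →L[𝕜] A, IsDoubleCentralizer 𝕜 L R → IsDoubleCentralizer 𝕜 L' R' →
        β (L * L') (R' * R) = β L R * β L' R') →
      (∀ a : A, β (ContinuousLinearMap.mul 𝕜 A a) ((ContinuousLinearMap.mul 𝕜 A).flip a)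
        = π a) →
      ∀ (L R : A →L[𝕜] A) (hDC : IsDoubleCentralizer 𝕜 L R), β L R = πbl ⟨L, hDC.1⟩) ∧
    -- it is unital,
    (∀ h : (1 : A →L[𝕜] A) ∈ LeftCentralizers 𝕜 A, πbl ⟨1, h⟩ = 1) ∧
    -- bounded with `‖π̄_l ∘ φ_l‖ ≤ m ‖π_l‖` for the norm `max(‖L‖, ‖R‖)` on `M(A)`,
    (∀ (L R : A →L[𝕜] A) (hDC : IsDoubleCentralizer 𝕜 L R),
      ‖πbl ⟨L, hDC.1⟩‖ ≤ m * ‖π‖ * max ‖L‖ ‖R‖) ∧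
    -- makes `X` a non-degenerate normed left `M(A)`-module,
    Dense (Submodule.span 𝕜 {y : X | ∃ (L R : A →L[𝕜] A)
      (hDC : IsDoubleCentralizer 𝕜 L R) (x : X), πbl ⟨L, hDC.1⟩ x = y} : Set X) ∧
    -- `π_l(A)` is a two-sided ideal in the image:
    (∀ (L R : A →L[𝕜] A) (hDC : IsDoubleCentralizer 𝕜 L R) (a : A),
      πbl ⟨L, hDC.1⟩ * π a = π (L a) ∧ π a * πbl ⟨L, hDC.1⟩ = π (R a)) ∧
    -- SOT formula for every bounded approximate left identity:
    (∀ (κ : Type*) (l' : Filter κ), l'.NeBot → ∀ (e' : κ → A) (m' : ℝ),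
      (∀ i, ‖e' i‖ ≤ m') →
      (∀ a : A, Tendsto (fun i => e' i * a) l' (𝓝 a)) →
      ∀ (L R : A →L[𝕜] A) (hDC : IsDoubleCentralizer 𝕜 L R) (x : X),
        Tendsto (fun i => π (L (e' i)) x) l' (𝓝 (πbl ⟨L, hDC.1⟩ x))) := by
  obtain ⟨huniq, hone, hnorm, hdense, hideal, hlim⟩ :=
    double_centralizer_module_left_general ⟨he_bdd, he_lim⟩ hπmul hnd hπbl_mul hπbl_lam
  exact ⟨fun β _ _ => huniq β, hone, hnorm, hdense, hideal,
    fun κ l' _ e' m' hb hl => hlim κ l' e' m' ⟨hb, hl⟩⟩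
end
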